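/- arXiv:1902.02851 — 4 statements merged into one kernel-verified Lean document; each statement's English description precedes it below -/
import Mathlib

section
/- Let v_max, v_obs ≥ 0 and set v_rel = v_max + v_obs (the maximum relative speed between the robot and any obstacle). Let ε ≥ 0 be the maximum spatial estimation error, let τ_plan > 0 be the planning time and t_f > 0 the planning horizon, and suppose the sensor horizon satisfies δ_sense ≥ (t_f + τ_plan)·v_rel + 2ε. Let x₀ ∈ ℝ² be the robot's measured initial position and let r : [0, τ_plan + t_f] → ℝ² be the robot's true position, satisfying ‖r(t) − x₀‖ ≤ v_max·t + ε for all t ∈ [0, τ_plan] and ‖r(t) − r(τ_plan)‖ ≤ v_max·(t − τ_plan) + ε for all t ∈ [τ_plan, τ_plan + t_f]. Let o : [0, τ_plan + t_f] → ℝ² be v_obs-Lipschitz (an obstacle trajectory) with ‖x₀ − o(0)‖ > δ_sense. Then r(t) ≠ o(t) for every t ∈ [τ_plan, τ_plan + t_f]; i.e., no obstacle lying farther than δ_sense from the robot at the current time can cause a collision during the next plan. -/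
/-- **Minimum sensor horizon** (Theorem 1 of RTD-D):
if the sensor horizon satisfies `δ_sense ≥ (t_f + τ_plan)·v_rel + 2ε` with
`v_rel = v_max + v_obs`, then no obstacle lying farther than `δ_sense` from the
robot's measured position at the current time can collide with the robot at any
time in `[τ_plan, τ_plan + t_f]`. -/
theorem sensor_horizon
    (v_max v_obs ε τ_plan t_f δ_sense : ℝ)
    (hv_max : 0 ≤ v_max) (hv_obs : 0 ≤ v_obs) (hε : 0 ≤ ε)
    (hτ_plan : 0 < τ_plan) (ht_f : 0 < t_f)
    (hδ : (t_f + τ_plan) * (v_max + v_obs) + 2 * ε ≤ δ_sense)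
    (x₀ : EuclideanSpace ℝ (Fin 2))
    (r o : ℝ → EuclideanSpace ℝ (Fin 2))
    -- during the current plan, the robot stays within `v_max·t + ε` of its measured state
    (hr₁ : ∀ t ∈ Set.Icc 0 τ_plan, ‖r t - x₀‖ ≤ v_max * t + ε)
    -- during the next plan, the robot stays within `v_max·(t − τ_plan) + ε` of its
    -- state at the start of that plan
    (hr₂ : ∀ t ∈ Set.Icc τ_plan (τ_plan + t_f),
      ‖r t - r τ_plan‖ ≤ v_max * (t - τ_plan) + ε)
    -- the obstacle trajectory is `v_obs`-Lipschitz
    (ho : ∀ s ∈ Set.Icc 0 (τ_plan + t_f), ∀ t ∈ Set.Icc 0 (τ_plan + t_f),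
      ‖o t - o s‖ ≤ v_obs * |t - s|)
    -- the obstacle is farther than the sensor horizon at the current time
    (hfar : δ_sense < ‖x₀ - o 0‖) :
    ∀ t ∈ Set.Icc τ_plan (τ_plan + t_f), r t ≠ o t := by
  rintro t ⟨ht1, ht2⟩ heq
  have h1 := hr₁ τ_plan ⟨hτ_plan.le, le_rfl⟩
  have h2 := hr₂ t ⟨ht1, ht2⟩
  have h3 := ho 0 ⟨le_rfl, by linarith⟩ t ⟨by linarith, ht2⟩
  rw [sub_zero, abs_of_nonneg (by linarith)] at h3
  have h4 : ‖x₀ - o 0‖ ≤ ‖r τ_plan - x₀‖ + ‖r t - r τ_plan‖ + ‖o t - o 0‖ := by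
    rw [← heq, ← norm_neg (r τ_plan - x₀), ← norm_neg (r t - r τ_plan)]
    have e : x₀ - o 0 = -(r τ_plan - x₀) + -(r t - r τ_plan) + (r t - o 0) := by abel
    rw [e]
    exact norm_add₃_le
  have h5 : t * (v_max + v_obs) ≤ (t_f + τ_plan) * (v_max + v_obs) :=
    mul_le_mul_of_nonneg_right (by linarith) (by linarith)
  nlinarith
end

section
/- Let v_max, v_obs ≥ 0 with v_rel = v_max + v_obs > 0, and let b_t > 0 be a temporal buffer. Let t₁ < t₂ with t₂ − t₁ ≤ 2·b_t / v_rel. Let r : [t₁, t₂] → ℝ² be v_max-Lipschitz (the robot's position) and o : [t₁, t₂] → ℝ² be v_obs-Lipschitz (an obstacle's position). If ‖r(t₁) − o(t₁)‖ > b_t and ‖r(t₂) − o(t₂)‖ > b_t, then r(t) ≠ o(t) for every t ∈ [t₁, t₂]; i.e., clearance greater than b_t at the two endpoint times of a sufficiently short interval precludes a collision anywhere in the interval. -/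
/-- **Not-at-fault on a short interval** (Lemma 9 of RTD-D):
if the robot (max speed `v_max`) and an obstacle (max speed `v_obs`) are both
farther than the temporal buffer `b_t` apart at the two endpoints `t₁ < t₂` of
an interval of length at most `τ_disc,max = 2·b_t / v_rel` with
`v_rel = v_max + v_obs`, then they do not collide anywhere in `[t₁, t₂]`. -/
theorem not_at_fault_short_interval
    (v_max v_obs b_t t₁ t₂ : ℝ)
    (hv_max : 0 ≤ v_max) (hv_obs : 0 ≤ v_obs)
    (hv_rel : 0 < v_max + v_obs) (hb_t : 0 < b_t)
    (ht : t₁ < t₂) (hstep : t₂ - t₁ ≤ 2 * b_t / (v_max + v_obs))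
    (r o : ℝ → EuclideanSpace ℝ (Fin 2))
    -- the robot's trajectory is `v_max`-Lipschitz on `[t₁, t₂]`
    (hr : ∀ s ∈ Set.Icc t₁ t₂, ∀ t ∈ Set.Icc t₁ t₂, ‖r t - r s‖ ≤ v_max * |t - s|)
    -- the obstacle's trajectory is `v_obs`-Lipschitz on `[t₁, t₂]`
    (ho : ∀ s ∈ Set.Icc t₁ t₂, ∀ t ∈ Set.Icc t₁ t₂, ‖o t - o s‖ ≤ v_obs * |t - s|)
    -- clearance greater than `b_t` at both endpoint times
    (h₁ : b_t < ‖r t₁ - o t₁‖) (h₂ : b_t < ‖r t₂ - o t₂‖) :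
    ∀ t ∈ Set.Icc t₁ t₂, r t ≠ o t := by
  intro t htm heq
  have m₁ : t₁ ∈ Set.Icc t₁ t₂ := ⟨le_refl _, ht.le⟩
  have m₂ : t₂ ∈ Set.Icc t₁ t₂ := ⟨ht.le, le_refl _⟩
  have key : ∀ s ∈ Set.Icc t₁ t₂, ‖r s - o s‖ ≤ (v_max + v_obs) * |s - t| := by
    intro s hs
    have e : r s - o s = (r s - r t) - (o s - o t) := by rw [heq]; abel
    rw [e]
    have a := norm_sub_le (r s - r t) (o s - o t)
    have b := hr t htm s hs
    have c := ho t htm s hs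
    linarith
  have k₁ := key t₁ m₁
  have k₂ := key t₂ m₂
  rw [abs_of_nonpos (by linarith [htm.1])] at k₁
  rw [abs_of_nonneg (by linarith [htm.2])] at k₂
  rw [le_div_iff₀ hv_rel] at hstep
  linarith
end

section
/- Let v_max, v_obs ≥ 0 with v_rel = v_max + v_obs > 0, let b_t > 0 be a temporal buffer, and let t_f > 0. Define the maximum time discretization τ_max = 2·b_t / v_rel, the number of prediction times n = ⌈t_f / τ_max⌉, and the time step τ = t_f / n. Let r : [0, t_f] → ℝ² be v_max-Lipschitz (the robot's position) and o : [0, t_f] → ℝ² be v_obs-Lipschitz (an obstacle's position). If ‖r(j·τ) − o(j·τ)‖ > b_t for every j ∈ {0, 1, …, n}, then r(t) ≠ o(t) for every t ∈ [0, t_f]; i.e., clearance greater than b_t at the finitely many discretized times guarantees no collision over the entire horizon. -/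
/-- **Not-at-fault for all time via time discretization** (Theorem 10 of RTD-D):
with maximum time discretization `τ_max = 2·b_t / v_rel`, number of prediction
times `n = ⌈t_f / τ_max⌉` and time step `τ = t_f / n`, clearance greater than
the temporal buffer `b_t` at each of the finitely many times `j·τ`,
`j = 0, …, n`, guarantees no collision over the whole horizon `[0, t_f]`. -/
theorem not_at_fault_time_discretization
    (v_max v_obs b_t t_f : ℝ) (n : ℕ) (τ : ℝ)
    (hv_max : 0 ≤ v_max) (hv_obs : 0 ≤ v_obs)
    (hv_rel : 0 < v_max + v_obs) (hb_t : 0 < b_t) (ht_f : 0 < t_f)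
    (hn : n = ⌈t_f / (2 * b_t / (v_max + v_obs))⌉₊)
    (hτ : τ = t_f / n)
    (r o : ℝ → EuclideanSpace ℝ (Fin 2))
    -- the robot's trajectory is `v_max`-Lipschitz on `[0, t_f]`
    (hr : ∀ s ∈ Set.Icc 0 t_f, ∀ t ∈ Set.Icc 0 t_f, ‖r t - r s‖ ≤ v_max * |t - s|)
    -- the obstacle's trajectory is `v_obs`-Lipschitz on `[0, t_f]`
    (ho : ∀ s ∈ Set.Icc 0 t_f, ∀ t ∈ Set.Icc 0 t_f, ‖o t - o s‖ ≤ v_obs * |t - s|)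
    -- clearance greater than `b_t` at every discretized time
    (hclear : ∀ j : ℕ, j ≤ n → b_t < ‖r (j * τ) - o (j * τ)‖) :
    ∀ t ∈ Set.Icc 0 t_f, r t ≠ o t := by
  intro t ht heq
  have hq : 0 < t_f / (2 * b_t / (v_max + v_obs)) := by positivity
  have hn0 : 0 < n := by
    rw [hn]
    exact Nat.ceil_pos.mpr hq
  have hnR : (0 : ℝ) < n := by exact_mod_cast hn0
  have hle : t_f / (2 * b_t / (v_max + v_obs)) ≤ n := by
    rw [hn]
    exact Nat.le_ceil _
  have hτ0 : 0 < τ := by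
    rw [hτ]
    positivity
  have hnτ : n * τ = t_f := by
    rw [hτ]
    field_simp
  have hstep : (v_max + v_obs) * τ ≤ 2 * b_t := by
    rw [div_le_iff₀ (by positivity), ← mul_div_assoc, le_div_iff₀ hv_rel, ← hnτ] at hle
    have h : (n : ℝ) * ((v_max + v_obs) * τ) ≤ n * (2 * b_t) := by linarith
    exact le_of_mul_le_mul_left h hnR
  obtain ⟨ht0, ht1⟩ := ht
  have hx0 : 0 ≤ t / τ := by positivity
  have hx1 : t / τ ≤ n := by
    rw [div_le_iff₀ hτ0, hnτ]
    exact ht1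
  have hxt : t / τ * τ = t := by field_simp
  set j := ⌊t / τ + 1 / 2⌋₊ with hj
  have hj1 : (j : ℝ) ≤ t / τ + 1 / 2 := Nat.floor_le (by linarith)
  have hj2 : t / τ + 1 / 2 < j + 1 := Nat.lt_floor_add_one _
  have hjn : j ≤ n := by
    have h : (j : ℝ) < (n : ℝ) + 1 := by linarith
    have h' : j < n + 1 := by exact_mod_cast h
    omega
  have hjnR : (j : ℝ) ≤ n := by exact_mod_cast hjn
  have hs : (j : ℝ) * τ ∈ Set.Icc 0 t_f :=
    ⟨by positivity, by rw [← hnτ]; exact mul_le_mul_of_nonneg_right hjnR hτ0.le⟩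
  have habs : |t - j * τ| ≤ τ / 2 := by
    rw [abs_le]
    constructor <;> nlinarith
  have h1 := hr _ hs t ⟨ht0, ht1⟩
  have h2 := ho _ hs t ⟨ht0, ht1⟩
  have h3 := hclear j hjn
  have h4 : r (j * τ) - o (j * τ) = (o t - o (j * τ)) - (r t - r (j * τ)) := by
    rw [heq]
    abel
  have h5 := norm_sub_le (o t - o (j * τ)) (r t - r (j * τ))
  rw [← h4] at h5
  have h6 := mul_le_mul_of_nonneg_left habs hv_rel.le
  linarith
end

section
/- Let R > 0, b ∈ (0, R/2), and r = 2·√(b·(2R − b)). Let S ⊂ ℝ² be a closed segment contained in a line ℓ, and let A ⊆ S be a finite set containing both endpoints of S such that consecutive points of A along S are at distance at most r from one another. Let D be a closed disk of radius R whose center is at distance at most R − b from ℓ, and suppose the chord D ∩ ℓ is contained in S. Then D contains a point of A. -/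
/-- **Correctness of the discretized obstacle representation** (circular
footprint): let `S` be the closed segment from `e₁` to `e₂`, lying in the line
`ℓ`, sampled by a finite set `A ⊆ S` that contains both endpoints and whose
consecutive points along `S` are spaced at most `r = 2·√(b·(2R − b))` apart.
If a closed disk `D` of radius `R` has its center at distance at most `R − b`
from `ℓ` (with `b ∈ (0, R/2)`) and its chord `D ∩ ℓ` is contained in `S`, then
`D` contains one of the sampled points. -/
theorem disk_contains_sample_point
    (R b r : ℝ) (hR : 0 < R) (hb : b ∈ Set.Ioo 0 (R / 2))
    (hr : r = 2 * Real.sqrt (b * (2 * R - b)))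
    (e₁ e₂ c : EuclideanSpace ℝ (Fin 2)) (he : e₁ ≠ e₂)
    (S ℓ D : Set (EuclideanSpace ℝ (Fin 2)))
    -- `S` is the closed segment from `e₁` to `e₂`, contained in the line `ℓ`
    (hS : S = segment ℝ e₁ e₂)
    (hℓ : ℓ = {x | ∃ t : ℝ, x = e₁ + t • (e₂ - e₁)})
    (A : Finset (EuclideanSpace ℝ (Fin 2)))
    (hA : ↑A ⊆ S) (he₁ : e₁ ∈ A) (he₂ : e₂ ∈ A)
    -- consecutive points of `A` along `S` are at distance at most `r`:
    -- after every sampled point other than `e₂` there is a sampled point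
    -- strictly farther from `e₁`, at distance at most `r`
    (hconsec : ∀ a ∈ A, a ≠ e₂ →
      ∃ a' ∈ A, dist e₁ a < dist e₁ a' ∧ dist a a' ≤ r)
    -- `D` is the closed disk of radius `R` centered at `c`, whose center is
    -- at distance at most `R − b` from `ℓ`
    (hD : D = Metric.closedBall c R)
    (hdist : Metric.infDist c ℓ ≤ R - b)
    -- the chord `D ∩ ℓ` is contained in `S`
    (hchord : D ∩ ℓ ⊆ S) :
    ∃ a ∈ A, a ∈ D := by
  obtain ⟨hb0, hb1⟩ := hb
  subst hS hℓ hD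
  set v := e₂ - e₁ with hv
  have hv0 : v ≠ 0 := sub_ne_zero.mpr (Ne.symm he)
  have hL : 0 < ‖v‖ := norm_pos_iff.mpr hv0
  set L := ‖v‖ with hLdef
  obtain ⟨t0, ht0⟩ : ∃ t0 : ℝ, inner ℝ (c - e₁) v = t0 * L ^ 2 :=
    ⟨inner ℝ (c - e₁) v / L ^ 2, by field_simp⟩
  set h := dist c (e₁ + t0 • v) with hh
  have hh0 : 0 ≤ h := dist_nonneg
  -- Pythagoras along the line
  have key : ∀ t : ℝ, dist c (e₁ + t • v) ^ 2
      = ‖c - e₁‖ ^ 2 - 2 * t * (t0 * L ^ 2) + t ^ 2 * L ^ 2 := by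
    intro t
    rw [dist_eq_norm, ← sub_sub, norm_sub_sq_real, inner_smul_right, ht0, norm_smul,
      mul_pow, Real.norm_eq_abs, sq_abs]
    ring
  have pyth : ∀ t : ℝ, dist c (e₁ + t • v) ^ 2 = h ^ 2 + ((t - t0) * L) ^ 2 := by
    intro t
    rw [hh, key, key]
    ring
  have hhb : h ≤ R - b := by
    refine le_trans ?_ hdist
    have hne : ({x | ∃ t : ℝ, x = e₁ + t • v} : Set (EuclideanSpace ℝ (Fin 2))).Nonempty :=
      ⟨e₁, 0, by simp⟩
    refine (Metric.le_infDist hne).mpr ?_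
    intro y hy
    obtain ⟨t, rfl⟩ := hy
    refine (sq_le_sq₀ hh0 dist_nonneg).mp ?_
    have := pyth t
    nlinarith [sq_nonneg ((t - t0) * L)]
  set w := Real.sqrt (R ^ 2 - h ^ 2) with hw
  have hwsq : w ^ 2 = R ^ 2 - h ^ 2 := Real.sq_sqrt (by nlinarith)
  have hw0 : 0 ≤ w := Real.sqrt_nonneg _
  have hrw : r ≤ 2 * w := by
    rw [hr]
    have : Real.sqrt (b * (2 * R - b)) ≤ w := Real.sqrt_le_sqrt (by nlinarith)
    linarith
  have memD : ∀ t : ℝ, |(t - t0) * L| ≤ w → e₁ + t • v ∈ Metric.closedBall c R := by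
    intro t ht
    rw [Metric.mem_closedBall, dist_comm]
    have h2 : ((t - t0) * L) ^ 2 ≤ w ^ 2 := by
      rw [← sq_abs]
      exact pow_le_pow_left₀ (abs_nonneg _) ht 2
    have h1 := pyth t
    exact abs_le_of_sq_le_sq' (by linarith) hR.le |>.2
  have memS : ∀ x ∈ segment ℝ e₁ e₂, ∃ t : ℝ, 0 ≤ t ∧ t ≤ 1 ∧ x = e₁ + t • v := by
    intro x hx
    rw [segment_eq_image'] at hx
    obtain ⟨t, ht, rfl⟩ := hx
    exact ⟨t, ht.1, ht.2, rfl⟩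
  have inj : ∀ t t' : ℝ, e₁ + t • v = e₁ + t' • v → t = t' := by
    intro t t' hE
    exact smul_left_injective ℝ hv0 (add_left_cancel hE)
  have inS : ∀ t : ℝ, |(t - t0) * L| ≤ w → 0 ≤ t ∧ t ≤ 1 := by
    intro t ht
    obtain ⟨t', h0, h1, hE⟩ := memS _ (hchord ⟨memD t ht, t, rfl⟩)
    rw [inj _ _ hE]
    exact ⟨h0, h1⟩
  obtain ⟨s, hs⟩ : ∃ s : ℝ, s * L = w := ⟨w / L, by field_simp⟩
  have hs0 : 0 ≤ s := by
    by_contra hn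
    nlinarith [not_le.mp hn]
  have hlo : 0 ≤ t0 - s := (inS (t0 - s) (by
    rw [show (t0 - s - t0) * L = -w by linarith, abs_neg, abs_of_nonneg hw0])).1
  have hhi : t0 + s ≤ 1 := (inS (t0 + s) (by
    rw [show (t0 + s - t0) * L = w by linarith, abs_of_nonneg hw0])).2
  have dist1 : ∀ t : ℝ, 0 ≤ t → dist e₁ (e₁ + t • v) = t * L := by
    intro t ht
    rw [dist_self_add_right, norm_smul, Real.norm_eq_abs, abs_of_nonneg ht]
  -- the farthest sampled point that is not past the chord
  obtain ⟨a, haF, hmax⟩ := Finset.exists_max_image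
    (A.filter fun x => dist e₁ x ≤ (t0 + s) * L) (fun x => dist e₁ x)
    ⟨e₁, by
      rw [Finset.mem_filter, dist_self]
      exact ⟨he₁, mul_nonneg (by linarith) hL.le⟩⟩
  rw [Finset.mem_filter] at haF
  obtain ⟨haA, ha2⟩ := haF
  refine ⟨a, haA, ?_⟩
  obtain ⟨t, h0, h1, rfl⟩ := memS a (hA haA)
  rw [dist1 t h0] at ha2
  have hts : t ≤ t0 + s := le_of_mul_le_mul_right ha2 hL
  apply memD
  rw [abs_le]
  by_cases hcase : t0 - s ≤ t
  · constructor <;> nlinarith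
  exfalso
  push Not at hcase
  obtain ⟨a', ha'A, hlt, hle⟩ := hconsec _ haA (by
    intro hE
    have : t = 1 := inj t 1 (by rw [hE, hv]; simp)
    linarith)
  have htri := dist_triangle e₁ (e₁ + t • v) a'
  rw [dist1 t h0] at htri
  have := hmax a' (by
    rw [Finset.mem_filter]
    refine ⟨ha'A, ?_⟩
    nlinarith)
  linarith
end
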